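/- arXiv:math-ph/0503023 — 2 statements merged into one kernel-verified Lean document; each statement's English description precedes it below -/
import Mathlib

section
/- Second Griffiths-type inequality on the Nishimori line: for every pair of bonds b, b' ∈ B, the quenched correlation [⟨S_b⟩] is differentiable in x_{b'} (total derivative, taking into account the dependence of both the Gaussian mean and the potential on x_{b'}) and satisfies d[⟨S_b⟩]/dx_{b'} = 2 x_{b'} [(⟨S_b S_{b'}⟩ − ⟨S_b⟩⟨S_{b'}⟩)²], which is nonnegative; hence [⟨S_b⟩] is nondecreasing with respect to each parameter x_{b'}. -/
open MeasureTheory ProbabilityTheory Filter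

noncomputable section

/-- The real value ±1 of a Boolean spin. -/
def spin (s : Bool) : ℝ := if s then 1 else -1

/-- The bond spin `S_b = S_n S_{n'}` for a bond `b` with endpoints `ep b = (n, n')`. -/
def bondSpin {V ι : Type*} (ep : ι → V × V) (S : V → Bool) (b : ι) : ℝ :=
  spin (S (ep b).1) * spin (S (ep b).2)

/-- The potential `U(j, S) = Σ_b x_b j_b S_b`. -/
def potential {V ι : Type*} [Fintype ι] (ep : ι → V × V) (x j : ι → ℝ)
    (S : V → Bool) : ℝ :=
  ∑ b, x b * j b * bondSpin ep S b

/-- The partition function `Z(j) = Σ_S exp U(j,S)`. -/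
def partitionFn {V ι : Type*} [Fintype V] [DecidableEq V] [Fintype ι]
    (ep : ι → V × V) (x j : ι → ℝ) : ℝ :=
  ∑ S : V → Bool, Real.exp (potential ep x j S)

/-- The Boltzmann–Gibbs expectation `⟨f⟩` at fixed disorder `j`. -/
def gibbs {V ι : Type*} [Fintype V] [DecidableEq V] [Fintype ι]
    (ep : ι → V × V) (x j : ι → ℝ) (f : (V → Bool) → ℝ) : ℝ :=
  (∑ S : V → Bool, f S * Real.exp (potential ep x j S)) / partitionFn ep x j

/-- The law of the couplings: independent Gaussians, `j_b` of mean `x_b` and variance 1. -/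
def couplings {ι : Type*} [Fintype ι] (x : ι → ℝ) : Measure (ι → ℝ) :=
  Measure.pi fun b => gaussianReal (x b) 1

/-- The quenched average `[F]`. -/
def quenched {ι : Type*} [Fintype ι] (x : ι → ℝ) (F : (ι → ℝ) → ℝ) : ℝ :=
  ∫ j, F j ∂(couplings x)

/-- The quenched pressure `P({x}) = [ln Z]`. -/
def pressure {V ι : Type*} [Fintype V] [DecidableEq V] [Fintype ι]
    (ep : ι → V × V) (x : ι → ℝ) : ℝ :=
  quenched x fun j => Real.log (partitionFn ep x j)

/-!
On the Nishimori line the Gibbs measure is a posterior: plant a uniform configuration `S` and draw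
each `j b` with mean `S_b * x b`; given `j`, the law of `S` is the Gibbs measure. By gauge
invariance, planting `S` amounts to flipping the signs of the couplings, which yields the Nishimori
identity `[⟨φ⟩ H] = [H]` whenever `φ` is a product of spins and `H` transforms under the gauge group
in the same way as `⟨φ⟩`.

Put `T = ⟨S_b S_b'⟩ - ⟨S_b⟩⟨S_b'⟩`. Shifting the Gaussian to mean zero, the total derivative of
`[⟨S_b⟩]` is `[(x_b' + j_b') T]`, and Gaussian integration by parts turns this into
`2 x_b' [T (1 - ⟨S_b'⟩)]`. The Nishimori identity gives `[T] = [⟨S_b S_b'⟩ T]` and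
`[⟨S_b'⟩ T] = [⟨S_b⟩⟨S_b'⟩ T]`, whose difference is `[T (1 - ⟨S_b'⟩)] = [T²]`.

All of this takes place on a finite group of configurations, with real characters in place of
products of spins.
-/

section Gibbs

variable {Ω : Type*} [Fintype Ω]

/-- The mean of the observable `f` under the Gibbs weights `exp U` on a finite configuration
space. With `U = potential ep x j` it is `gibbs ep x j f`. -/
def gibbsMean (U f : Ω → ℝ) : ℝ :=
  (∑ S, f S * Real.exp (U S)) / ∑ S, Real.exp (U S)

/-- The truncated correlation `⟨fg⟩ - ⟨f⟩⟨g⟩` of two observables. -/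
def gibbsCov (U f g : Ω → ℝ) : ℝ :=
  gibbsMean U (f * g) - gibbsMean U f * gibbsMean U g

lemma sum_exp_pos [Nonempty Ω] (U : Ω → ℝ) : 0 < ∑ S, Real.exp (U S) :=
  Finset.sum_pos (fun _ _ ↦ Real.exp_pos _) Finset.univ_nonempty

lemma gibbsMean_mul_sum_exp [Nonempty Ω] (U f : Ω → ℝ) :
    gibbsMean U f * ∑ S, Real.exp (U S) = ∑ S, f S * Real.exp (U S) :=
  div_mul_cancel₀ _ (sum_exp_pos U).ne'

lemma gibbsMean_one [Nonempty Ω] (U : Ω → ℝ) : gibbsMean U 1 = 1 := by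
  simp only [gibbsMean, Pi.one_apply, one_mul]
  exact div_self (sum_exp_pos U).ne'

lemma gibbsMean_smul (U f : Ω → ℝ) (c : ℝ) : gibbsMean U (c • f) = c * gibbsMean U f := by
  simp only [gibbsMean, Pi.smul_apply, smul_eq_mul, mul_assoc, ← Finset.mul_sum, mul_div_assoc]

lemma gibbsCov_smul_right (U f g : Ω → ℝ) (c : ℝ) :
    gibbsCov U f (c • g) = c * gibbsCov U f g := by
  simp only [gibbsCov, mul_smul_comm, gibbsMean_smul]
  ring

lemma gibbsMean_comp_equiv (e : Ω ≃ Ω) (U f : Ω → ℝ) :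
    gibbsMean (U ∘ e) (f ∘ e) = gibbsMean U f := by
  simp only [gibbsMean, Function.comp_apply]
  rw [e.sum_comp fun S ↦ f S * Real.exp (U S), e.sum_comp fun S ↦ Real.exp (U S)]

@[fun_prop]
lemma measurable_gibbsMean (f : Ω → ℝ) : Measurable fun U ↦ gibbsMean U f := by
  unfold gibbsMean
  fun_prop

@[fun_prop]
lemma measurable_gibbsCov (f g : Ω → ℝ) : Measurable fun U ↦ gibbsCov U f g := by
  unfold gibbsCov
  fun_prop

lemma norm_gibbsMean_le (U f : Ω → ℝ) : ‖gibbsMean U f‖ ≤ ‖f‖ := by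
  have hZ : 0 ≤ ∑ S, Real.exp (U S) := Finset.sum_nonneg fun _ _ ↦ (Real.exp_pos _).le
  rw [gibbsMean, norm_div, Real.norm_of_nonneg hZ]
  refine div_le_of_le_mul₀ hZ (norm_nonneg f) ?_
  calc ‖∑ S, f S * Real.exp (U S)‖ ≤ ∑ S, ‖f S * Real.exp (U S)‖ := norm_sum_le _ _
    _ ≤ ∑ S, ‖f‖ * Real.exp (U S) := by
      gcongr with S
      rw [norm_mul, Real.norm_of_nonneg (Real.exp_pos _).le]
      gcongr
      exact norm_le_pi_norm f S
    _ = ‖f‖ * ∑ S, Real.exp (U S) := (Finset.mul_sum ..).symm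

lemma norm_gibbsCov_le (U f g : Ω → ℝ) : ‖gibbsCov U f g‖ ≤ 2 * (‖f‖ * ‖g‖) :=
  calc ‖gibbsCov U f g‖ ≤ ‖gibbsMean U (f * g)‖ + ‖gibbsMean U f * gibbsMean U g‖ :=
      norm_sub_le _ _
    _ ≤ ‖f * g‖ + ‖f‖ * ‖g‖ := by
      rw [norm_mul]
      gcongr <;> exact norm_gibbsMean_le U _
    _ ≤ 2 * (‖f‖ * ‖g‖) := by linarith [norm_mul_le f g]

lemma hasDerivAt_gibbsMean [Nonempty Ω] {U : ℝ → Ω → ℝ} {U' : Ω → ℝ} {t : ℝ}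
    (hU : ∀ S, HasDerivAt (fun s ↦ U s S) (U' S) t) (f : Ω → ℝ) :
    HasDerivAt (fun s ↦ gibbsMean (U s) f) (gibbsCov (U t) f U') t := by
  have hnum : HasDerivAt (fun s ↦ ∑ S, f S * Real.exp (U s S))
      (∑ S, (f * U') S * Real.exp (U t S)) t :=
    HasDerivAt.fun_sum fun S _ ↦ ((hU S).exp.const_mul (f S)).congr_deriv <| by
      rw [Pi.mul_apply]; ring
  have hden : HasDerivAt (fun s ↦ ∑ S, Real.exp (U s S)) (∑ S, U' S * Real.exp (U t S)) t :=
    HasDerivAt.fun_sum fun S _ ↦ (hU S).exp.congr_deriv (mul_comm _ _)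
  have hZ := (sum_exp_pos (U t)).ne'
  refine (hnum.div hden hZ).congr_deriv ?_
  unfold gibbsCov gibbsMean
  field_simp

end Gibbs

section Energy

variable {Ω ι : Type*} [Fintype ι]

/-- The energy `∑ b, h b * a b S` of interactions `a` in the fields `h`. With `a b` the bond spin
`S_b` and `h = x * j` it is the potential `U(j, S)`. -/
def energy (a : ι → Ω → ℝ) (h : ι → ℝ) (S : Ω) : ℝ :=
  ∑ b, h b * a b S

@[fun_prop]
lemma measurable_energy (a : ι → Ω → ℝ) : Measurable (energy a) := by
  unfold energy
  fun_prop

variable [DecidableEq ι]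

lemma energy_single (a : ι → Ω → ℝ) (b : ι) (c : ℝ) : energy a (Pi.single b c) = c • a b := by
  ext S
  simp [energy, Pi.single_apply]

variable [Fintype Ω] [Nonempty Ω]

lemma hasDerivAt_gibbsMean_energy {a : ι → Ω → ℝ} {h : ℝ → ι → ℝ} {b : ι} {c t : ℝ}
    (hh : HasDerivAt h (Pi.single b c) t) (f : Ω → ℝ) :
    HasDerivAt (fun s ↦ gibbsMean (energy a (h s)) f)
      (c * gibbsCov (energy a (h t)) f (a b)) t := by
  have hE (S : Ω) : HasDerivAt (fun s ↦ energy a (h s) S) (energy a (Pi.single b c) S) t :=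
    HasDerivAt.fun_sum fun i _ ↦ (hasDerivAt_pi.1 hh i).mul_const (a i S)
  refine (hasDerivAt_gibbsMean hE f).congr_deriv ?_
  rw [energy_single, gibbsCov_smul_right]

lemma hasDerivAt_gibbsCov_energy {a : ι → Ω → ℝ} {h : ℝ → ι → ℝ} {b : ι} {c t : ℝ}
    (hh : HasDerivAt h (Pi.single b c) t) (hb : a b * a b = 1) (f : Ω → ℝ) :
    HasDerivAt (fun s ↦ gibbsCov (energy a (h s)) f (a b))
      (-2 * c * (gibbsCov (energy a (h t)) f (a b) * gibbsMean (energy a (h t)) (a b))) t := by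
  have hd := hasDerivAt_gibbsMean_energy (a := a) hh
  refine ((hd (f * a b)).sub ((hd f).mul (hd (a b)))).congr_deriv ?_
  simp only [gibbsCov, mul_assoc, hb, mul_one, gibbsMean_one]
  ring

end Energy

section Couplings

variable {ι : Type*}

lemma measurableEmbedding_mul_left_of_mul_self {c : ι → ℝ} (hc : c * c = 1) :
    MeasurableEmbedding (c * ·) :=
  (MeasurableEquiv.ofInvolutive (c * ·) (fun j ↦ by simp [← mul_assoc, hc])
    (by fun_prop)).measurableEmbedding

variable [Fintype ι]

instance (x : ι → ℝ) : IsProbabilityMeasure (couplings x) := by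
  unfold couplings
  infer_instance

/-- The density of `couplings x` with respect to Lebesgue measure. -/
def couplingsPDF (x j : ι → ℝ) : ℝ :=
  ∏ b, gaussianPDFReal (x b) 1 (j b)

lemma couplingsPDF_nonneg (x j : ι → ℝ) : 0 ≤ couplingsPDF x j :=
  Finset.prod_nonneg fun _ _ ↦ gaussianPDFReal_nonneg _ _ _

lemma couplingsPDF_eq_exp (x j : ι → ℝ) :
    couplingsPDF x j =
      (∏ _b : ι, (√(2 * Real.pi))⁻¹) * Real.exp (∑ b, -(j b - x b) ^ 2 / 2) := by
  rw [Real.exp_sum, ← Finset.prod_mul_distrib]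
  simp [couplingsPDF, gaussianPDFReal]

lemma couplingsPDF_eq_mul_exp (x j : ι → ℝ) :
    couplingsPDF x j = couplingsPDF 0 j * Real.exp (∑ b, (x b * j b - x b ^ 2 / 2)) := by
  rw [couplingsPDF_eq_exp, couplingsPDF_eq_exp, mul_assoc, ← Real.exp_add,
    ← Finset.sum_add_distrib]
  congr! 3 with b
  rw [Pi.zero_apply]
  ring

lemma measurable_couplingsPDF (x : ι → ℝ) : Measurable (couplingsPDF x) := by
  unfold couplingsPDF
  fun_prop

lemma couplings_eq_withDensity (x : ι → ℝ) :
    couplings x = volume.withDensity fun j ↦ ENNReal.ofReal (couplingsPDF x j) := by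
  refine Measure.pi_eq fun s hs ↦ ?_
  have hint : Integrable (couplingsPDF x) (Measure.pi fun b ↦ volume.restrict (s b)) :=
    Integrable.fintype_prod_dep fun b ↦ (integrable_gaussianPDFReal (x b) 1).restrict
  rw [withDensity_apply _ (.univ_pi hs), volume_pi, Measure.restrict_pi_pi,
    ← ofReal_integral_eq_lintegral_ofReal hint (.of_forall (couplingsPDF_nonneg x))]
  simp only [couplingsPDF, gaussianReal_apply_eq_integral _ one_ne_zero]
  rw [integral_fintype_prod_eq_prod (𝕜 := ℝ) fun b ↦ gaussianPDFReal (x b) 1,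
    ENNReal.ofReal_prod_of_nonneg fun b _ ↦ integral_nonneg fun _ ↦ gaussianPDFReal_nonneg ..]

lemma integral_couplings (x : ι → ℝ) (H : (ι → ℝ) → ℝ) :
    ∫ j, H j ∂couplings x = ∫ j, H j * couplingsPDF x j := by
  rw [couplings_eq_withDensity, integral_withDensity_eq_integral_toReal_smul
    (measurable_couplingsPDF x).ennreal_ofReal (.of_forall fun _ ↦ ENNReal.ofReal_lt_top)]
  simp only [ENNReal.toReal_ofReal (couplingsPDF_nonneg x _), smul_eq_mul, mul_comm]

lemma integrable_couplings_iff {x : ι → ℝ} {H : (ι → ℝ) → ℝ} :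
    Integrable H (couplings x) ↔ Integrable fun j ↦ H j * couplingsPDF x j := by
  rw [couplings_eq_withDensity, integrable_withDensity_iff_integrable_smul'
    (measurable_couplingsPDF x).ennreal_ofReal (.of_forall fun _ ↦ ENNReal.ofReal_lt_top)]
  simp only [ENNReal.toReal_ofReal (couplingsPDF_nonneg x _), smul_eq_mul, mul_comm]

lemma integrable_eval_couplings (x : ι → ℝ) (b : ι) :
    Integrable (fun j ↦ j b) (couplings x) :=
  integrable_comp_eval (μ := fun b ↦ gaussianReal (x b) 1) (f := fun y ↦ y)
    ((memLp_id_gaussianReal 1).integrable le_rfl)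

lemma integrable_eval_sub_couplings (x : ι → ℝ) (b : ι) (c : ℝ) :
    Integrable (fun j ↦ j b - c) (couplings x) :=
  (integrable_eval_couplings x b).sub (integrable_const c)

lemma measurePreserving_add_couplings (x : ι → ℝ) :
    MeasurePreserving (x + ·) (couplings 0) (couplings x) := by
  refine measurePreserving_pi _ _ (f := fun b y ↦ x b + y) fun b ↦ ⟨by fun_prop, ?_⟩
  rw [gaussianReal_map_const_add, Pi.zero_apply, zero_add]

lemma quenched_eq_integral_add (x : ι → ℝ) (F : (ι → ℝ) → ℝ) :
    quenched x F = ∫ g, F (x + g) ∂couplings 0 :=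
  ((measurePreserving_add_couplings x).integral_comp (measurableEmbedding_addLeft x) F).symm

lemma measurePreserving_mul_couplings {c : ι → ℝ} (hc : c * c = 1) (x : ι → ℝ) :
    MeasurePreserving (c * ·) (couplings x) (couplings (c * x)) := by
  refine measurePreserving_pi _ _ (f := fun b y ↦ c b * y) fun b ↦ ⟨by fun_prop, ?_⟩
  rw [gaussianReal_map_const_mul]
  congr 1
  ext
  simpa [sq] using congr_fun hc b

variable [DecidableEq ι]

lemma hasLineDerivAt_couplingsPDF (x j : ι → ℝ) (b : ι) :
    HasLineDerivAt ℝ (couplingsPDF x) ((x b - j b) * couplingsPDF x j) j (Pi.single b 1) := by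
  have hcoord (i : ι) : HasDerivAt (fun t : ℝ ↦ (j + t • Pi.single b 1 : ι → ℝ) i)
      ((Pi.single b 1 : ι → ℝ) i) 0 := by
    simpa using ((hasDerivAt_id (0 : ℝ)).mul_const ((Pi.single b 1 : ι → ℝ) i)).const_add (j i)
  have hexponent : HasDerivAt
      (fun t : ℝ ↦ ∑ i, -((j + t • Pi.single b 1 : ι → ℝ) i - x i) ^ 2 / 2) (x b - j b) 0 := by
    refine (HasDerivAt.fun_sum fun i _ ↦
      (((hcoord i).sub_const (x i)).pow 2).neg.div_const 2).congr_deriv ?_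
    simp only [Nat.cast_ofNat, Nat.add_one_sub_one, pow_one, zero_smul, add_zero,
      Pi.single_apply, mul_ite, mul_one, mul_zero, neg_div, ite_div, zero_div,
      Finset.sum_neg_distrib, Finset.sum_ite_eq', Finset.mem_univ, if_true]
    ring
  simp only [HasLineDerivAt, couplingsPDF_eq_exp]
  refine (hexponent.exp.const_mul _).congr_deriv ?_
  simp only [zero_smul, add_zero]
  ring

lemma stein_identity_couplings {x : ι → ℝ} {b : ι} {G G' : (ι → ℝ) → ℝ}
    (hG : ∀ j, HasLineDerivAt ℝ G (G' j) j (Pi.single b 1))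
    (hintG : Integrable G (couplings x)) (hintG' : Integrable G' (couplings x))
    (hintmul : Integrable (fun j ↦ (j b - x b) * G j) (couplings x)) :
    ∫ j, (j b - x b) * G j ∂couplings x = ∫ j, G' j ∂couplings x := by
  have hreorder (j : ι → ℝ) : (j b - x b) * G j * couplingsPDF x j =
      -(G j * ((x b - j b) * couplingsPDF x j)) := by ring
  rw [integrable_couplings_iff] at hintG hintG' hintmul
  simp only [hreorder] at hintmul
  have hparts := integral_bilinear_hasLineDerivAt_right_eq_neg_left_of_integrable
    (B := ContinuousLinearMap.mul ℝ ℝ) hintG' (by simpa using hintmul.neg) hintG (fun j _ ↦ hG j)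
    (fun j _ ↦ hasLineDerivAt_couplingsPDF x j b)
  simp only [ContinuousLinearMap.mul_apply'] at hparts
  simp only [integral_couplings, hreorder, integral_neg, hparts, neg_neg]

end Couplings

section Integrability

variable {Ω ι : Type*} [Fintype Ω] [Fintype ι] {μ : Measure (ι → ℝ)} {H : (ι → ℝ) → ℝ}

lemma integrable_gibbsMean_mul (a : ι → Ω → ℝ) (x : ι → ℝ) (f : Ω → ℝ) (hH : Integrable H μ) :
    Integrable (fun j ↦ gibbsMean (energy a (x * j)) f * H j) μ :=
  hH.bdd_mul (Measurable.aestronglyMeasurable (by fun_prop))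
    (.of_forall fun _ ↦ norm_gibbsMean_le _ f)

lemma integrable_mul_gibbsCov (a : ι → Ω → ℝ) (x : ι → ℝ) (f g : Ω → ℝ) (hH : Integrable H μ) :
    Integrable (fun j ↦ H j * gibbsCov (energy a (x * j)) f g) μ :=
  hH.mul_bdd (Measurable.aestronglyMeasurable (by fun_prop))
    (.of_forall fun _ ↦ norm_gibbsCov_le _ f g)

lemma integrable_gibbsCov [IsFiniteMeasure μ] (a : ι → Ω → ℝ) (x : ι → ℝ) (f g : Ω → ℝ) :
    Integrable (fun j ↦ gibbsCov (energy a (x * j)) f g) μ := by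
  simpa only [one_mul] using integrable_mul_gibbsCov a x f g (integrable_const (1 : ℝ))

end Integrability

section Nishimori

-- Bayes: if `S` is uniform and `j` has law `couplings ((a · S) * x)`, then the posterior of `S`
-- given `j` is the Gibbs measure with energy `energy a (x * j)`.
lemma sum_integral_couplings_gibbsMean {Ω ι : Type*} [Fintype Ω] [Fintype ι] [Nonempty Ω]
    {a : ι → Ω → ℝ} (ha : ∀ b, a b * a b = 1) (x : ι → ℝ) (f : Ω → ℝ) {H : (ι → ℝ) → ℝ}
    (hH : ∀ S, Integrable H (couplings ((a · S) * x))) :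
    ∑ S, ∫ j, gibbsMean (energy a (x * j)) f * H j ∂couplings ((a · S) * x) =
      ∑ S, f S * ∫ j, H j ∂couplings ((a · S) * x) := by
  have hpdf (S : Ω) (j : ι → ℝ) : couplingsPDF ((a · S) * x) j =
      couplingsPDF 0 j * Real.exp (∑ b, -(x b ^ 2 / 2)) * Real.exp (energy a (x * j) S) := by
    rw [couplingsPDF_eq_mul_exp, mul_assoc, ← Real.exp_add, energy, ← Finset.sum_add_distrib]
    congr! 3 with b
    have hb : a b S * a b S = 1 := congr_fun (ha b) S
    simp only [Pi.mul_apply]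
    linear_combination -(x b ^ 2 / 2) * hb
  simp only [← integral_const_mul]
  simp only [integral_couplings]
  rw [← integral_finsetSum, ← integral_finsetSum]
  · congr 1 with j
    set K := couplingsPDF 0 j * Real.exp (∑ b, -(x b ^ 2 / 2))
    calc ∑ S, gibbsMean (energy a (x * j)) f * H j * couplingsPDF ((a · S) * x) j
        = H j * K * (gibbsMean (energy a (x * j)) f * ∑ S, Real.exp (energy a (x * j) S)) := by
          simp only [hpdf, Finset.mul_sum]
          exact Finset.sum_congr rfl fun S _ ↦ by ring
      _ = H j * K * ∑ S, f S * Real.exp (energy a (x * j) S) := by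
          rw [gibbsMean_mul_sum_exp]
      _ = ∑ S, f S * H j * couplingsPDF ((a · S) * x) j := by
          simp only [hpdf, Finset.mul_sum]
          exact Finset.sum_congr rfl fun S _ ↦ by ring
  · exact fun S _ ↦ integrable_couplings_iff.1 ((hH S).const_mul (f S))
  · exact fun S _ ↦ integrable_couplings_iff.1 (integrable_gibbsMean_mul a x f (hH S))

variable {G ι : Type*} [AddGroup G]

lemma realChar_mul_self [Finite G] (φ : AddChar G ℝ) : (φ * φ : G → ℝ) = 1 := by
  ext S
  rw [Pi.mul_apply, ← abs_mul_abs_self, ← Real.norm_eq_abs, φ.norm_apply, Pi.one_apply, one_mul]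

/-- `H` picks up the factor `φ σ` when the couplings undergo the gauge transformation
`j b ↦ χ b σ * j b`. -/
def IsGaugeCovariant (χ : ι → AddChar G ℝ) (φ : AddChar G ℝ) (H : (ι → ℝ) → ℝ) : Prop :=
  ∀ σ j, H ((χ · σ) * j) = φ σ * H j

namespace IsGaugeCovariant

variable {χ : ι → AddChar G ℝ} {φ ψ : AddChar G ℝ} {H K : (ι → ℝ) → ℝ}

lemma mul (hH : IsGaugeCovariant χ φ H) (hK : IsGaugeCovariant χ ψ K) :
    IsGaugeCovariant χ (φ * ψ) (H * K) := fun σ j ↦ by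
  simp only [Pi.mul_apply, hH σ j, hK σ j, AddChar.mul_apply]
  ring

lemma sub (hH : IsGaugeCovariant χ φ H) (hK : IsGaugeCovariant χ φ K) :
    IsGaugeCovariant χ φ (H - K) := fun σ j ↦ by
  simp only [Pi.sub_apply, hH σ j, hK σ j, mul_sub]

end IsGaugeCovariant

variable [Fintype G] [Fintype ι] (χ : ι → AddChar G ℝ) (x : ι → ℝ)

lemma isGaugeCovariant_gibbsMean (φ : AddChar G ℝ) :
    IsGaugeCovariant χ φ fun j ↦ gibbsMean (energy (χ ·) (x * j)) φ := fun σ j ↦ by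
  have henergy : energy (χ ·) (x * ((χ · σ) * j)) =
      energy (χ ·) (x * j) ∘ Equiv.addLeft σ := by
    ext S
    simp only [energy, Pi.mul_apply, Function.comp_apply, Equiv.coe_addLeft,
      AddChar.map_add_eq_mul]
    exact Finset.sum_congr rfl fun b _ ↦ by ring
  have hφ : (φ : G → ℝ) = φ σ • (φ ∘ Equiv.addLeft σ) := by
    ext S
    have hσ : φ σ * φ σ = 1 := congr_fun (realChar_mul_self φ) σ
    simp [AddChar.map_add_eq_mul, ← mul_assoc, hσ]
  calc gibbsMean (energy (χ ·) (x * ((χ · σ) * j))) φ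
      = gibbsMean (energy (χ ·) (x * j) ∘ Equiv.addLeft σ) (φ σ • (φ ∘ Equiv.addLeft σ)) := by
        rw [henergy, ← hφ]
    _ = φ σ * gibbsMean (energy (χ ·) (x * j)) φ := by
        rw [gibbsMean_smul, gibbsMean_comp_equiv]

lemma isGaugeCovariant_gibbsCov (φ ψ : AddChar G ℝ) :
    IsGaugeCovariant χ (φ * ψ) fun j ↦ gibbsCov (energy (χ ·) (x * j)) φ ψ :=
  (isGaugeCovariant_gibbsMean χ x (φ * ψ)).sub
    ((isGaugeCovariant_gibbsMean χ x φ).mul (isGaugeCovariant_gibbsMean χ x ψ))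

variable {χ x}

lemma nishimori_identity {φ : AddChar G ℝ} {H : (ι → ℝ) → ℝ}
    (hH : IsGaugeCovariant χ φ H) (hint : Integrable H (couplings x)) :
    quenched x (fun j ↦ gibbsMean (energy (χ ·) (x * j)) φ * H j) = quenched x H := by
  have hχ (σ : G) : ((χ · σ) * (χ · σ) : ι → ℝ) = 1 := by
    ext b
    exact congr_fun (realChar_mul_self (χ b)) σ
  have hφ (σ : G) : φ σ * φ σ = 1 := congr_fun (realChar_mul_self φ) σ
  have hgauge (σ : G) (F : (ι → ℝ) → ℝ) :
      ∫ j, F j ∂couplings ((χ · σ) * x) = ∫ j, F ((χ · σ) * j) ∂couplings x :=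
    ((measurePreserving_mul_couplings (hχ σ) x).integral_comp
      (measurableEmbedding_mul_left_of_mul_self (hχ σ)) F).symm
  have hint_gauge (σ : G) : Integrable H (couplings ((χ · σ) * x)) := by
    rw [← (measurePreserving_mul_couplings (hχ σ) x).integrable_comp_emb
      (measurableEmbedding_mul_left_of_mul_self (hχ σ))]
    exact (hint.const_mul (φ σ)).congr (.of_forall fun j ↦ (hH σ j).symm)
  have hmean (σ : G) (j : ι → ℝ) : gibbsMean (energy (χ ·) (x * ((χ · σ) * j))) φ =
      φ σ * gibbsMean (energy (χ ·) (x * j)) φ := isGaugeCovariant_gibbsMean χ x φ σ j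
  have hcancel (σ : G) (u v : ℝ) : φ σ * u * (φ σ * v) = u * v := by
    linear_combination u * v * hφ σ
  have hcancel_left (σ : G) (u : ℝ) : φ σ * (φ σ * u) = u := by
    rw [← mul_assoc, hφ, one_mul]
  have hsum := sum_integral_couplings_gibbsMean (fun b ↦ realChar_mul_self (χ b)) x φ hint_gauge
  simp only [hgauge, hmean, hH _ _, hcancel, integral_const_mul, hcancel_left,
    Finset.sum_const, Finset.card_univ] at hsum
  exact smul_right_injective ℝ Fintype.card_ne_zero hsum

lemma quenched_gibbsCov_mul_one_sub (φ ψ : AddChar G ℝ) :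
    quenched x (fun j ↦ gibbsCov (energy (χ ·) (x * j)) φ ψ *
        (1 - gibbsMean (energy (χ ·) (x * j)) ψ)) =
      quenched x fun j ↦ gibbsCov (energy (χ ·) (x * j)) φ ψ ^ 2 := by
  let T (j : ι → ℝ) := gibbsCov (energy (χ ·) (x * j)) φ ψ
  let mean (θ : AddChar G ℝ) (j : ι → ℝ) := gibbsMean (energy (χ ·) (x * j)) θ
  have hT : Integrable T (couplings x) := integrable_gibbsCov (χ ·) x φ ψ
  have hmul (θ : AddChar G ℝ) {H : (ι → ℝ) → ℝ} (hH : Integrable H (couplings x)) :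
      Integrable (fun j ↦ mean θ j * H j) (couplings x) :=
    integrable_gibbsMean_mul (χ ·) x θ hH
  have hTgauge : IsGaugeCovariant χ (φ * ψ) T := isGaugeCovariant_gibbsCov χ x φ ψ
  have hψTgauge : IsGaugeCovariant χ φ (fun j ↦ mean ψ j * T j) := by
    have hchar : ψ * (φ * ψ) = φ := by
      ext S
      have hψ : ψ S * ψ S = 1 := congr_fun (realChar_mul_self ψ) S
      simp only [AddChar.mul_apply]
      linear_combination φ S * hψ
    exact hchar ▸ (isGaugeCovariant_gibbsMean χ x ψ).mul hTgauge
  calc quenched x (fun j ↦ T j * (1 - mean ψ j))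
      = quenched x T - quenched x (fun j ↦ mean ψ j * T j) := by
        rw [quenched, quenched, quenched, ← integral_sub hT (hmul ψ hT)]
        congr 1 with j
        ring
    _ = quenched x (fun j ↦ mean (φ * ψ) j * T j) -
          quenched x (fun j ↦ mean φ j * (mean ψ j * T j)) := by
        rw [nishimori_identity hTgauge hT, nishimori_identity hψTgauge (hmul ψ hT)]
    _ = quenched x (fun j ↦ T j ^ 2) := by
        rw [quenched, quenched, quenched,
          ← integral_sub (hmul (φ * ψ) hT) (hmul φ (hmul ψ hT))]
        congr 1 with j
        simp only [T, mean, gibbsCov, AddChar.coe_mul]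
        ring

end Nishimori

section Derivative

lemma hasDerivAt_update_mul_update_add {ι : Type*} [Finite ι] [DecidableEq ι]
    (x g : ι → ℝ) (b : ι) (t : ℝ) :
    HasDerivAt (fun s ↦ Function.update x b s * (Function.update x b s + g))
      (Pi.single b (2 * t + g b)) t := by
  have := Fintype.ofFinite ι
  have hu := hasDerivAt_update x b t
  refine (hu.mul (hu.add_const g)).congr_deriv ?_
  ext i
  rcases eq_or_ne i b with rfl | hi
  · simp only [Pi.add_apply, Pi.mul_apply, Pi.single_eq_same, Function.update_self]
    ring
  · simp [hi]

variable {Ω ι : Type*} [Fintype Ω] [Nonempty Ω] [Fintype ι]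

lemma quenched_sub_mul_gibbsCov {a : ι → Ω → ℝ} {b : ι} (hb : a b * a b = 1) (f : Ω → ℝ)
    (x : ι → ℝ) :
    quenched x (fun j ↦ (j b - x b) * gibbsCov (energy a (x * j)) f (a b)) =
      -2 * x b * quenched x fun j ↦
        gibbsMean (energy a (x * j)) (a b) * gibbsCov (energy a (x * j)) f (a b) := by
  classical
  have hT := integrable_gibbsCov (μ := couplings x) a x f (a b)
  have hline (j : ι → ℝ) : HasLineDerivAt ℝ (fun j ↦ gibbsCov (energy a (x * j)) f (a b))
      (-2 * x b * (gibbsMean (energy a (x * j)) (a b) * gibbsCov (energy a (x * j)) f (a b)))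
      j (Pi.single b 1) := by
    have hfield : HasDerivAt (fun t : ℝ ↦ x * (j + t • Pi.single b 1)) (Pi.single b (x b)) 0 := by
      refine ((((hasDerivAt_id (0 : ℝ)).smul_const _).const_add j).const_mul x).congr_deriv ?_
      rw [one_smul, ← Pi.single_mul_right, mul_one]
    refine (hasDerivAt_gibbsCov_energy hfield hb f).congr_deriv ?_
    rw [zero_smul, add_zero, mul_comm (gibbsCov _ _ _)]
  have hlin := integrable_eval_sub_couplings x b (x b)
  rw [quenched, stein_identity_couplings hline hT
    ((integrable_gibbsMean_mul a x (a b) hT).const_mul _)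
    (integrable_mul_gibbsCov a x f (a b) hlin), integral_const_mul, quenched]

lemma quenched_add_mul_gibbsCov {a : ι → Ω → ℝ} {b : ι} (hb : a b * a b = 1) (f : Ω → ℝ)
    (x : ι → ℝ) :
    quenched x (fun j ↦ (x b + j b) * gibbsCov (energy a (x * j)) f (a b)) =
      2 * x b * quenched x fun j ↦
        gibbsCov (energy a (x * j)) f (a b) * (1 - gibbsMean (energy a (x * j)) (a b)) := by
  have hT := integrable_gibbsCov (μ := couplings x) a x f (a b)
  have hlin := integrable_eval_sub_couplings x b (x b)
  calc quenched x (fun j ↦ (x b + j b) * gibbsCov (energy a (x * j)) f (a b))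
      = 2 * x b * quenched x (fun j ↦ gibbsCov (energy a (x * j)) f (a b)) +
          quenched x (fun j ↦ (j b - x b) * gibbsCov (energy a (x * j)) f (a b)) := by
        rw [quenched, quenched, quenched, ← integral_const_mul,
          ← integral_add (hT.const_mul _) (integrable_mul_gibbsCov a x f (a b) hlin)]
        congr 1 with j
        ring
    _ = 2 * x b * (quenched x (fun j ↦ gibbsCov (energy a (x * j)) f (a b)) -
          quenched x fun j ↦
            gibbsMean (energy a (x * j)) (a b) * gibbsCov (energy a (x * j)) f (a b)) := by
        rw [quenched_sub_mul_gibbsCov hb]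
        ring
    _ = 2 * x b * quenched x fun j ↦
          gibbsCov (energy a (x * j)) f (a b) * (1 - gibbsMean (energy a (x * j)) (a b)) := by
        rw [quenched, quenched, quenched,
          ← integral_sub hT (integrable_gibbsMean_mul a x (a b) hT)]
        congr! 3 with j
        ring

lemma hasDerivAt_quenched_gibbsMean [DecidableEq ι] (a : ι → Ω → ℝ) (f : Ω → ℝ) (x : ι → ℝ)
    (b : ι) :
    HasDerivAt (fun s ↦ quenched (Function.update x b s) fun j ↦
        gibbsMean (energy a (Function.update x b s * j)) f)
      (quenched x fun j ↦ (x b + j b) * gibbsCov (energy a (x * j)) f (a b)) (x b) := by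
  have hbound (g : ι → ℝ) (s : ℝ) (hs : s ∈ Metric.ball (x b) 1) :
      ‖(2 * s + g b) * gibbsCov
          (energy a (Function.update x b s * (Function.update x b s + g))) f (a b)‖ ≤
        (2 * (|x b| + 1) + |g b|) * (2 * (‖f‖ * ‖a b‖)) := by
    have hs' : |s| ≤ |x b| + 1 := by
      have := abs_sub_abs_le_abs_sub s (x b)
      rw [Metric.mem_ball, Real.dist_eq] at hs
      linarith
    rw [norm_mul, Real.norm_eq_abs]
    gcongr
    · calc |2 * s + g b| ≤ |2 * s| + |g b| := abs_add_le _ _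
        _ ≤ 2 * (|x b| + 1) + |g b| := by rw [abs_mul, abs_two]; gcongr
    · exact norm_gibbsCov_le _ f (a b)
  have hint : Integrable (fun g ↦ (2 * (|x b| + 1) + |g b|) * (2 * (‖f‖ * ‖a b‖)))
      (couplings (0 : ι → ℝ)) :=
    ((integrable_const _).add (integrable_eval_couplings 0 b).abs).mul_const _
  simp only [quenched_eq_integral_add]
  refine (hasDerivAt_integral_of_dominated_loc_of_deriv_le (Metric.ball_mem_nhds (x b) one_pos)
    (.of_forall fun s ↦ Measurable.aestronglyMeasurable (by fun_prop)) ?_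
    (Measurable.aestronglyMeasurable (by fun_prop)) (.of_forall hbound) hint
    (.of_forall fun g s _ ↦
      hasDerivAt_gibbsMean_energy (hasDerivAt_update_mul_update_add x g b s) f)).2.congr_deriv ?_
  · exact .of_bound (Measurable.aestronglyMeasurable (by fun_prop)) ‖f‖
      (.of_forall fun _ ↦ norm_gibbsMean_le _ f)
  · congr 1 with g
    rw [Function.update_eq_self, Pi.add_apply]
    ring

end Derivative

section Griffiths

variable {G ι : Type*} [AddGroup G] [Fintype G] [Fintype ι] [DecidableEq ι]

lemma hasDerivAt_quenched_gibbsMean_addChar (χ : ι → AddChar G ℝ) (φ : AddChar G ℝ)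
    (x : ι → ℝ) (b : ι) :
    HasDerivAt (fun s ↦ quenched (Function.update x b s) fun j ↦
        gibbsMean (energy (χ ·) (Function.update x b s * j)) φ)
      (2 * x b * quenched x fun j ↦ gibbsCov (energy (χ ·) (x * j)) φ (χ b) ^ 2) (x b) := by
  rw [← quenched_gibbsCov_mul_one_sub,
    ← quenched_add_mul_gibbsCov (a := (χ ·)) (realChar_mul_self (χ b))]
  exact hasDerivAt_quenched_gibbsMean (χ ·) φ x b

theorem griffiths_second_inequality_general (χ : ι → AddChar G ℝ) (φ : AddChar G ℝ)
    (x : ι → ℝ) (b : ι) (hx : 0 ≤ x b) :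
    HasDerivAt (fun s ↦ quenched (Function.update x b s) fun j ↦
        gibbsMean (energy (χ ·) (Function.update x b s * j)) φ)
      (2 * x b * quenched x fun j ↦ gibbsCov (energy (χ ·) (x * j)) φ (χ b) ^ 2) (x b) ∧
    0 ≤ 2 * x b * quenched x (fun j ↦ gibbsCov (energy (χ ·) (x * j)) φ (χ b) ^ 2) ∧
    MonotoneOn (fun s ↦ quenched (Function.update x b s) fun j ↦
        gibbsMean (energy (χ ·) (Function.update x b s * j)) φ) (Set.Ici 0) := by
  have hnonneg (y : ι → ℝ) (hy : 0 ≤ y b) :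
      0 ≤ 2 * y b * quenched y fun j ↦ gibbsCov (energy (χ ·) (y * j)) φ (χ b) ^ 2 :=
    mul_nonneg (by positivity) (integral_nonneg fun _ ↦ sq_nonneg _)
  have hderiv (s : ℝ) := hasDerivAt_quenched_gibbsMean_addChar χ φ (Function.update x b s) b
  simp only [Function.update_idem, Function.update_self] at hderiv
  refine ⟨hasDerivAt_quenched_gibbsMean_addChar χ φ x b, hnonneg x hx,
    monotoneOn_of_hasDerivWithinAt_nonneg (convex_Ici 0)
      (fun s _ ↦ (hderiv s).continuousAt.continuousWithinAt)
      (fun s _ ↦ (hderiv s).hasDerivWithinAt) fun s hs ↦ ?_⟩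
  rw [interior_Ici, Set.mem_Ioi] at hs
  simpa only [Function.update_self] using
    hnonneg (Function.update x b s) (by rw [Function.update_self]; exact hs.le)

end Griffiths

/-- The bond spin `S_b` as a real character of the spin configurations, which form a group under
pointwise exclusive or; a global sign flip relates `spin` to a character, and the two signs in
`S_n S_{n'}` cancel. -/
def bondChar {V ι : Type*} (ep : ι → V × V) (b : ι) : AddChar (V → Bool) ℝ where
  toFun S := bondSpin ep S b
  map_zero_eq_one' := by simp [bondSpin, spin]
  map_add_eq_mul' S T := by
    have hspin (s t : Bool) : spin (s + t) = -(spin s * spin t) := by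
      cases s <;> cases t <;> simp [spin, Bool.add_eq_xor]
    simp only [bondSpin, Pi.add_apply, hspin]
    ring

lemma gibbs_eq_gibbsMean {V ι : Type*} [Fintype V] [DecidableEq V] [Fintype ι] (ep : ι → V × V)
    (x j : ι → ℝ) (f : (V → Bool) → ℝ) :
    gibbs ep x j f = gibbsMean (energy (bondChar ep ·) (x * j)) f :=
  rfl

/-- Second Griffiths-type inequality on the Nishimori line: for all bonds
`b, b'`, the quenched correlation `[⟨S_b⟩]` is differentiable in `x_{b'}` (total derivative)
with `d[⟨S_b⟩]/dx_{b'} = 2 x_{b'} [(⟨S_b S_{b'}⟩ − ⟨S_b⟩⟨S_{b'}⟩)²] ≥ 0`; hence `[⟨S_b⟩]`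
is nondecreasing in each parameter `x_{b'}`. -/
theorem griffiths_second_inequality
    {V ι : Type*} [Fintype V] [DecidableEq V] [Fintype ι] [DecidableEq ι]
    (ep : ι → V × V) (hep : ∀ b, (ep b).1 ≠ (ep b).2)
    (x : ι → ℝ) (hx : ∀ b, 0 ≤ x b) (b b' : ι) :
    HasDerivAt (fun s => quenched (Function.update x b' s)
        (fun j => gibbs ep (Function.update x b' s) j (fun S => bondSpin ep S b)))
      (2 * x b' * quenched x (fun j =>
        (gibbs ep x j (fun S => bondSpin ep S b * bondSpin ep S b') -
          gibbs ep x j (fun S => bondSpin ep S b) *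
            gibbs ep x j (fun S => bondSpin ep S b')) ^ 2)) (x b') ∧
    0 ≤ 2 * x b' * quenched x (fun j =>
        (gibbs ep x j (fun S => bondSpin ep S b * bondSpin ep S b') -
          gibbs ep x j (fun S => bondSpin ep S b) *
            gibbs ep x j (fun S => bondSpin ep S b')) ^ 2) ∧
    MonotoneOn (fun s => quenched (Function.update x b' s)
        (fun j => gibbs ep (Function.update x b' s) j (fun S => bondSpin ep S b)))
      (Set.Ici (0 : ℝ)) := by
  simp only [gibbs_eq_gibbsMean]
  exact griffiths_second_inequality_general (bondChar ep) (bondChar ep b) x b' (hx b')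

end
end

section
/- Monotonicity of the quenched pressure in the bond set: if B' ⊆ B are two bond sets on the same finite site set V and x > 0, then the quenched pressure with all parameters equal to x satisfies P_{B'} ≤ P_B. -/
open MeasureTheory ProbabilityTheory Filter

noncomputable section

/-!
A gauge transformation turns `couplings x` into the law of `j_b = x_b T_b + ξ_b`, for a spin
configuration `T` and standard Gaussian noise `ξ`, and leaves `log Z` invariant; so the pressure is
also the average of `log Z` when `T` is hidden and uniformly random. On the Nishimori line, the
density of that planted law with respect to pure noise is proportional to `Z` itself, hence the
pressure equals their relative entropy plus `∑ x_b² / 2` and a constant. Decreasing `|x_b|` amounts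
to attenuating the signal and adding fresh noise, a Markov kernel that preserves pure noise, so the
data processing inequality makes the relative entropy increasing in every `|x_b|`.
-/

open InformationTheory

section MeasureTheory

theorem lintegral_fintype_prod_eq_prod {ι : Type*} [Fintype ι] {α : ι → Type*}
    [∀ i, MeasurableSpace (α i)] (μ : ∀ i, Measure (α i)) [∀ i, IsProbabilityMeasure (μ i)]
    {f : ∀ i, α i → ENNReal} (hf : ∀ i, Measurable (f i)) :
    ∫⁻ x, ∏ i, f i (x i) ∂Measure.pi μ = ∏ i, ∫⁻ t, f i t ∂μ i := by
  refine (lintegral_prod_eq_prod_lintegral_of_indepFun Finset.univ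
    (fun i (x : ∀ i, α i) => f i (x i)) (iIndepFun_pi fun i => (hf i).aemeasurable)
    fun i => (hf i).comp (measurable_pi_apply i)).trans ?_
  exact Finset.prod_congr rfl fun i _ => (measurePreserving_eval μ i).lintegral_comp (hf i)

theorem pi_withDensity {ι : Type*} [Fintype ι] {α : ι → Type*} [∀ i, MeasurableSpace (α i)]
    (μ : ∀ i, Measure (α i)) [∀ i, IsProbabilityMeasure (μ i)]
    {f : ∀ i, α i → ENNReal} (hf : ∀ i, Measurable (f i))
    [∀ i, SigmaFinite ((μ i).withDensity (f i))] :
    Measure.pi (fun i => (μ i).withDensity (f i)) =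
      (Measure.pi μ).withDensity fun x => ∏ i, f i (x i) := by
  classical
  refine Measure.pi_eq fun s hs => ?_
  have indicator_prod (x : ∀ i, α i) :
      (Set.univ.pi s).indicator (fun x => ∏ i, f i (x i)) x =
        ∏ i, (s i).indicator (f i) (x i) := by
    simp only [Set.indicator_apply, Set.mem_univ_pi, Finset.prod_ite_zero, Finset.mem_univ,
      true_imp_iff]
  rw [withDensity_apply _ (.univ_pi hs), ← lintegral_indicator (.univ_pi hs)]
  simp_rw [indicator_prod]
  rw [lintegral_fintype_prod_eq_prod μ fun i => (hf i).indicator (hs i)]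
  exact Finset.prod_congr rfl fun i _ => by
    rw [withDensity_apply _ (hs i), lintegral_indicator (hs i)]

theorem llr_withDensity_ofReal {α : Type*} [MeasurableSpace α] (ν : Measure α) [SigmaFinite ν]
    {f : α → ℝ} (hf : Measurable f) (hf_nonneg : 0 ≤ f) :
    llr (ν.withDensity fun a => ENNReal.ofReal (f a)) ν =ᵐ[ν] fun a => Real.log (f a) := by
  filter_upwards [Measure.rnDeriv_withDensity ν hf.ennreal_ofReal] with a ha
  rw [llr, ha, ENNReal.toReal_ofReal (hf_nonneg a)]

theorem klDiv_map_prod_le {α β γ : Type*} [MeasurableSpace α] [MeasurableSpace β]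
    [MeasurableSpace γ] (μ ν : Measure α) [IsFiniteMeasure μ] [IsFiniteMeasure ν]
    (ξ : Measure β) [IsProbabilityMeasure ξ] {f : α × β → γ} (hf : Measurable f) :
    klDiv ((μ.prod ξ).map f) ((ν.prod ξ).map f) ≤ klDiv μ ν := by
  refine (klDiv_map_le _ _ hf).trans_eq ?_
  rw [← Measure.compProd_const, ← Measure.compProd_const, klDiv_compProd_left]

end MeasureTheory

section Gaussian

theorem gaussianReal_eq_withDensity_gaussianReal_zero (m : ℝ) {v : NNReal} (hv : v ≠ 0) :
    gaussianReal m v = (gaussianReal 0 v).withDensity fun t =>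
      ENNReal.ofReal (Real.exp ((m * t - m ^ 2 / 2) / v)) := by
  rw [gaussianReal_of_var_ne_zero _ hv, gaussianReal_of_var_ne_zero _ hv,
    ← withDensity_mul _ (measurable_gaussianPDF _ _) (by fun_prop)]
  congr 1 with t
  simp only [gaussianPDF, Pi.mul_apply, gaussianPDFReal]
  rw [← ENNReal.ofReal_mul (by positivity), mul_assoc (_)⁻¹, ← Real.exp_add]
  congr 3
  ring

theorem measurePreserving_mul_add_mul_gaussianReal (m₁ m₂ a b : ℝ) (v₁ v₂ : NNReal) :
    MeasurePreserving (fun p : ℝ × ℝ => a * p.1 + b * p.2)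
      ((gaussianReal m₁ v₁).prod (gaussianReal m₂ v₂))
      (gaussianReal (a * m₁ + b * m₂)
        (.mk (a ^ 2) (sq_nonneg a) * v₁ + .mk (b ^ 2) (sq_nonneg b) * v₂)) := by
  refine ⟨by fun_prop, ?_⟩
  rw [← gaussianReal_conv_gaussianReal, ← gaussianReal_map_const_mul, ← gaussianReal_map_const_mul,
    Measure.conv, Measure.map_prod_map _ _ (by fun_prop) (by fun_prop),
    Measure.map_map (by fun_prop) (by fun_prop)]
  rfl

end Gaussian

section Couplings

variable {ι : Type*}

/-- The degraded Gaussian channel: it scales the signal `p.1` by `ρ` and adds to it as much of the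
noise `p.2` as brings a unit variance back to `1`. -/
def degrade (ρ : ι → ℝ) (p : (ι → ℝ) × (ι → ℝ)) : ι → ℝ :=
  fun b => ρ b * p.1 b + √(1 - ρ b ^ 2) * p.2 b

theorem measurable_degrade (ρ : ι → ℝ) : Measurable (degrade ρ) := by
  unfold degrade
  fun_prop

variable [Fintype ι]

instance isProbabilityMeasure_couplings (x : ι → ℝ) : IsProbabilityMeasure (couplings x) := by
  unfold couplings; infer_instance

theorem couplings_eq_withDensity_s13 (x : ι → ℝ) :
    couplings x = (couplings 0).withDensity fun g =>
      ENNReal.ofReal (Real.exp (∑ b, x b * g b - ∑ b, x b ^ 2 / 2)) := by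
  have gaussianReal_eq (b : ι) : gaussianReal (x b) 1 = (gaussianReal 0 1).withDensity fun t =>
      ENNReal.ofReal (Real.exp (x b * t - x b ^ 2 / 2)) := by
    simpa using gaussianReal_eq_withDensity_gaussianReal_zero (x b) one_ne_zero
  have (b : ι) : SigmaFinite ((gaussianReal 0 1).withDensity fun t =>
      ENNReal.ofReal (Real.exp (x b * t - x b ^ 2 / 2))) := by
    rw [← gaussianReal_eq]; infer_instance
  simp_rw [couplings, gaussianReal_eq, Pi.zero_apply]
  rw [pi_withDensity (fun _ => gaussianReal 0 1) fun b => by fun_prop]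
  congr with g
  rw [← ENNReal.ofReal_prod_of_nonneg fun _ _ => (Real.exp_pos _).le, ← Real.exp_sum,
    Finset.sum_sub_distrib]

theorem measurePreserving_mul_couplings_s13 (x : ι → ℝ) {s : ι → ℝ} (hs : ∀ b, s b * s b = 1) :
    MeasurePreserving (fun (j : ι → ℝ) b => s b * j b) (couplings x)
      (couplings fun b => s b * x b) := by
  refine measurePreserving_pi _ _ fun b => ⟨by fun_prop, ?_⟩
  rw [gaussianReal_map_const_mul]
  congr
  ext
  simp [sq, hs]

theorem measurePreserving_degrade_couplings (y : ι → ℝ) {ρ : ι → ℝ} (hρ : ∀ b, |ρ b| ≤ 1) :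
    MeasurePreserving (degrade ρ) ((couplings y).prod (couplings 0))
      (couplings fun b => ρ b * y b) := by
  have single_bond (b : ι) : MeasurePreserving (fun p : ℝ × ℝ => ρ b * p.1 + √(1 - ρ b ^ 2) * p.2)
      ((gaussianReal (y b) 1).prod (gaussianReal 0 1)) (gaussianReal (ρ b * y b) 1) := by
    convert measurePreserving_mul_add_mul_gaussianReal (y b) 0 (ρ b) √(1 - ρ b ^ 2) 1 1 using 2
    · simp
    · ext
      simp [Real.sq_sqrt (sub_nonneg.2 ((sq_le_one_iff_abs_le_one _).2 (hρ b)))]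
  have pairs := measurePreserving_arrowProdEquivProdArrow ℝ ℝ ι
    (fun b => gaussianReal (y b) 1) fun _ => gaussianReal 0 1
  exact (measurePreserving_pi _ _ single_bond).comp (pairs.symm _)

theorem integrable_apply_couplings (x : ι → ℝ) (b : ι) :
    Integrable (fun j : ι → ℝ => j b) (couplings x) :=
  integrable_eval ((memLp_id_gaussianReal 1).integrable le_rfl)

end Couplings

section Gauge

variable {V ι : Type*} (ep : ι → V × V)

theorem spin_beq (s t : Bool) : spin (s == t) = spin s * spin t := by
  cases s <;> cases t <;> simp [spin]

theorem bondSpin_mul_self (S : V → Bool) (b : ι) : bondSpin ep S b * bondSpin ep S b = 1 := by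
  unfold bondSpin spin
  split_ifs <;> norm_num

theorem abs_bondSpin (S : V → Bool) (b : ι) : |bondSpin ep S b| = 1 := by
  rw [← pow_eq_one_iff_of_nonneg (abs_nonneg _) two_ne_zero, sq_abs, sq, bondSpin_mul_self]

/-- The gauge transformation of spins by `T`: the sitewise product of the `±1` spins, which for
Boolean spins is `==`. -/
def gaugeTransform (T S : V → Bool) : V → Bool := fun v => S v == T v

theorem gaugeTransform_involutive (T : V → Bool) : Function.Involutive (gaugeTransform T) := by
  intro S
  funext v
  simp [gaugeTransform]

theorem bondSpin_gaugeTransform (T S : V → Bool) (b : ι) :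
    bondSpin ep (gaugeTransform T S) b = bondSpin ep S b * bondSpin ep T b := by
  simp only [bondSpin, gaugeTransform, spin_beq]
  ring

variable [Fintype ι] (x j : ι → ℝ)

theorem potential_bondSpin_mul (T S : V → Bool) :
    potential ep x (fun b => bondSpin ep T b * j b) S = potential ep x j (gaugeTransform T S) := by
  unfold potential
  refine Finset.sum_congr rfl fun b _ => ?_
  rw [bondSpin_gaugeTransform]
  ring

theorem partitionFn_bondSpin_mul [Fintype V] [DecidableEq V] (T : V → Bool) :
    partitionFn ep x (fun b => bondSpin ep T b * j b) = partitionFn ep x j := by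
  simp_rw [partitionFn, potential_bondSpin_mul]
  exact (gaugeTransform_involutive T).bijective.sum_comp fun S => Real.exp (potential ep x j S)

theorem measurePreserving_bondSpin_mul_couplings (T : V → Bool) :
    MeasurePreserving (fun j b => bondSpin ep T b * j b)
      (couplings fun b => bondSpin ep T b * x b) (couplings x) := by
  simpa only [← mul_assoc, bondSpin_mul_self, one_mul] using
    measurePreserving_mul_couplings_s13 (fun b => bondSpin ep T b * x b) (bondSpin_mul_self ep T)

-- The mean `x_b` of the couplings being also their inverse temperature, the cross term of the
-- Gaussian likelihood is exactly the potential.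
theorem couplings_bondSpin_mul_eq_withDensity (T : V → Bool) :
    couplings (fun b => bondSpin ep T b * x b) = (couplings 0).withDensity fun g =>
      ENNReal.ofReal (Real.exp (potential ep x g T) * Real.exp (-∑ b, x b ^ 2 / 2)) := by
  rw [couplings_eq_withDensity_s13]
  congr with g
  rw [← Real.exp_add, ← sub_eq_add_neg, potential]
  congr 3
  · exact Finset.sum_congr rfl fun b _ => by ring
  · simp only [mul_pow, sq (bondSpin _ _ _), bondSpin_mul_self, one_mul]

variable {ep x} {E : Type*} [NormedAddCommGroup E] {F : (ι → ℝ) → E}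

theorem integrable_couplings_bondSpin_mul (hF : Integrable F (couplings x)) {T : V → Bool}
    (gauge_invariant : ∀ j, F (fun b => bondSpin ep T b * j b) = F j) :
    Integrable F (couplings fun b => bondSpin ep T b * x b) := by
  simpa only [Function.comp_def, gauge_invariant] using
    (measurePreserving_bondSpin_mul_couplings ep x T).integrable_comp_of_integrable hF

theorem integral_couplings_bondSpin_mul [NormedSpace ℝ E]
    (hF : Integrable F (couplings x)) {T : V → Bool}
    (gauge_invariant : ∀ j, F (fun b => bondSpin ep T b * j b) = F j) :
    ∫ j, F j ∂couplings (fun b => bondSpin ep T b * x b) = ∫ j, F j ∂couplings x := by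
  have flip_preserving := measurePreserving_bondSpin_mul_couplings ep x T
  rw [← flip_preserving.map_eq, integral_map flip_preserving.aemeasurable
    (flip_preserving.map_eq ▸ hF.aestronglyMeasurable)]
  simp_rw [gauge_invariant]

end Gauge

section PartitionFunction

variable {V ι : Type*} [Fintype ι] (ep : ι → V × V) (x j : ι → ℝ)

theorem abs_potential_le (S : V → Bool) : |potential ep x j S| ≤ ∑ b, |x b| * |j b| := by
  refine (Finset.abs_sum_le_sum_abs _ _).trans_eq (Finset.sum_congr rfl fun b _ => ?_)
  rw [abs_mul, abs_bondSpin, mul_one, abs_mul]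

variable [Fintype V] [DecidableEq V]

theorem partitionFn_pos : 0 < partitionFn ep x j :=
  Finset.sum_pos (fun _ _ => Real.exp_pos _) Finset.univ_nonempty

theorem continuous_partitionFn : Continuous (partitionFn ep x) := by
  unfold partitionFn potential
  fun_prop

theorem abs_log_partitionFn_le :
    |Real.log (partitionFn ep x j)| ≤
      Real.log (Fintype.card (V → Bool)) + ∑ b, |x b| * |j b| := by
  have card_pos : (0 : ℝ) < Fintype.card (V → Bool) := by exact_mod_cast Fintype.card_pos
  have potential_bounds (S : V → Bool) := abs_le.1 (abs_potential_le ep x j S)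
  rw [abs_le]
  constructor
  · have exp_le : Real.exp (-∑ b, |x b| * |j b|) ≤ partitionFn ep x j :=
      (Real.exp_le_exp.2 (potential_bounds fun _ => true).1).trans <|
        Finset.single_le_sum (f := fun S => Real.exp (potential ep x j S))
          (fun _ _ => (Real.exp_pos _).le) (Finset.mem_univ _)
    linarith [(Real.le_log_iff_exp_le (partitionFn_pos ep x j)).2 exp_le,
      Real.log_natCast_nonneg (Fintype.card (V → Bool))]
  · rw [Real.log_le_iff_le_exp (partitionFn_pos ep x j), Real.exp_add, Real.exp_log card_pos,
      ← nsmul_eq_mul]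
    exact Finset.sum_le_card_nsmul _ _ _ fun S _ => Real.exp_le_exp.2 (potential_bounds S).2

theorem integrable_log_partitionFn (y : ι → ℝ) :
    Integrable (fun j => Real.log (partitionFn ep x j)) (couplings y) := by
  have bound_integrable : Integrable (fun j : ι → ℝ =>
      Real.log (Fintype.card (V → Bool)) + ∑ b, |x b| * |j b|) (couplings y) :=
    (integrable_const _).add <| integrable_finsetSum _ fun b _ =>
      (integrable_apply_couplings y b).abs.const_mul _
  refine bound_integrable.mono' ?_ (.of_forall fun j => abs_log_partitionFn_le ep x j)
  exact ((continuous_partitionFn ep x).log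
    fun j => (partitionFn_pos ep x j).ne').aestronglyMeasurable

end PartitionFunction

section PlantedLaw

variable {V ι : Type*} [Fintype V] [DecidableEq V] [Fintype ι] (ep : ι → V × V)

/-- The law of the couplings `j_b = x_b T_b + ξ_b`, where `T` is a hidden uniformly random spin
configuration and `ξ` is standard Gaussian noise: the equal-weight mixture of the gauge transforms
of `couplings x`. -/
def plantedLaw (x : ι → ℝ) : Measure (ι → ℝ) :=
  (Fintype.card (V → Bool) : ENNReal)⁻¹ •
    ∑ T : V → Bool, couplings fun b => bondSpin ep T b * x b

instance isProbabilityMeasure_plantedLaw (x : ι → ℝ) :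
    IsProbabilityMeasure (plantedLaw ep x) where
  measure_univ := by
    simp only [plantedLaw, Measure.smul_apply, Measure.finsetSum_apply, measure_univ,
      Finset.sum_const, Finset.card_univ, nsmul_one, smul_eq_mul]
    exact ENNReal.inv_mul_cancel (by simp) (by simp)

section GaugeInvariant

variable {ep} {x : ι → ℝ} {E : Type*} [NormedAddCommGroup E] {F : (ι → ℝ) → E}

theorem integrable_plantedLaw (hF : Integrable F (couplings x))
    (gauge_invariant : ∀ T j, F (fun b => bondSpin ep T b * j b) = F j) :
    Integrable F (plantedLaw ep x) :=
  (integrable_finsetSum_measure.2 fun T _ =>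
    integrable_couplings_bondSpin_mul hF (gauge_invariant T)).smul_measure (by simp)

theorem integral_plantedLaw [NormedSpace ℝ E] (hF : Integrable F (couplings x))
    (gauge_invariant : ∀ T j, F (fun b => bondSpin ep T b * j b) = F j) :
    ∫ j, F j ∂plantedLaw ep x = ∫ j, F j ∂couplings x := by
  rw [plantedLaw, integral_smul_measure, integral_finsetSum_measure fun T _ =>
    integrable_couplings_bondSpin_mul hF (gauge_invariant T)]
  simp_rw [integral_couplings_bondSpin_mul hF (gauge_invariant _)]
  simp [← Nat.cast_smul_eq_nsmul ℝ, smul_smul]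

end GaugeInvariant

theorem plantedLaw_eq_withDensity (x : ι → ℝ) :
    plantedLaw ep x = (couplings 0).withDensity fun g => ENNReal.ofReal
      (partitionFn ep x g * Real.exp (-∑ b, x b ^ 2 / 2) / Fintype.card (V → Bool)) := by
  have measurable_weight (T : V → Bool) : Measurable fun g =>
      ENNReal.ofReal (Real.exp (potential ep x g T) * Real.exp (-∑ b, x b ^ 2 / 2)) := by
    unfold potential
    fun_prop
  have card_pos : (0 : ℝ) < Fintype.card (V → Bool) := by exact_mod_cast Fintype.card_pos
  simp_rw [plantedLaw, couplings_bondSpin_mul_eq_withDensity]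
  rw [← Measure.sum_fintype, ← withDensity_tsum measurable_weight,
    ← withDensity_smul' _ _ (ENNReal.inv_ne_top.2 (by simp)), tsum_fintype]
  congr with g
  rw [Pi.smul_apply, Finset.sum_apply, smul_eq_mul,
    ← ENNReal.ofReal_sum_of_nonneg fun _ _ => by positivity, ← Finset.sum_mul,
    ← ENNReal.ofReal_natCast, ← ENNReal.ofReal_inv_of_pos card_pos,
    ← ENNReal.ofReal_mul (by positivity), ← div_eq_inv_mul, partitionFn]

theorem plantedLaw_map_degrade (y : ι → ℝ) {ρ : ι → ℝ} (hρ : ∀ b, |ρ b| ≤ 1) :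
    ((plantedLaw ep y).prod (couplings 0)).map (degrade ρ) =
      plantedLaw ep fun b => ρ b * y b := by
  simp_rw [plantedLaw, ← Measure.sum_fintype, Measure.prod_smul_left, Measure.prod_sum_left,
    Measure.map_smul]
  rw [Measure.map_sum (measurable_degrade ρ).aemeasurable]
  congr with T
  rw [(measurePreserving_degrade_couplings _ hρ).map_eq]
  congr! 3
  ring

theorem plantedLaw_absolutelyContinuous (x : ι → ℝ) : plantedLaw ep x ≪ couplings 0 := by
  rw [plantedLaw_eq_withDensity]
  exact withDensity_absolutelyContinuous _ _

theorem llr_plantedLaw (x : ι → ℝ) :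
    llr (plantedLaw ep x) (couplings 0) =ᵐ[plantedLaw ep x] fun j =>
      Real.log (partitionFn ep x j) - (∑ b, x b ^ 2 / 2 + Real.log (Fintype.card (V → Bool))) := by
  have card_ne_zero : (Fintype.card (V → Bool) : ℝ) ≠ 0 := by exact_mod_cast Fintype.card_ne_zero
  have llr_eq_log_density := llr_withDensity_ofReal (couplings (0 : ι → ℝ))
    (((continuous_partitionFn ep x).mul_const (Real.exp (-∑ b, x b ^ 2 / 2))).div_const
      (Fintype.card (V → Bool) : ℝ)).measurable
    fun j => (div_pos (mul_pos (partitionFn_pos ep x j) (Real.exp_pos _)) (by positivity)).le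
  rw [← plantedLaw_eq_withDensity] at llr_eq_log_density
  filter_upwards [(plantedLaw_absolutelyContinuous ep x).ae_le llr_eq_log_density] with j hj
  have partitionFn_ne_zero := (partitionFn_pos ep x j).ne'
  rw [hj, Real.log_div (by positivity) card_ne_zero,
    Real.log_mul partitionFn_ne_zero (Real.exp_ne_zero _), Real.log_exp]
  ring

theorem integrable_log_partitionFn_plantedLaw (x : ι → ℝ) :
    Integrable (fun j => Real.log (partitionFn ep x j)) (plantedLaw ep x) :=
  integrable_plantedLaw (integrable_log_partitionFn ep x x) fun T j => by
    rw [partitionFn_bondSpin_mul]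

theorem integral_log_partitionFn_plantedLaw (x : ι → ℝ) :
    ∫ j, Real.log (partitionFn ep x j) ∂plantedLaw ep x = pressure ep x :=
  integral_plantedLaw (integrable_log_partitionFn ep x x) fun T j => by
    rw [partitionFn_bondSpin_mul]

theorem klDiv_plantedLaw_ne_top (x : ι → ℝ) : klDiv (plantedLaw ep x) (couplings 0) ≠ ⊤ :=
  klDiv_ne_top (plantedLaw_absolutelyContinuous ep x) <|
    (integrable_congr (llr_plantedLaw ep x)).2 <|
      (integrable_log_partitionFn_plantedLaw ep x).sub (integrable_const _)

theorem toReal_klDiv_plantedLaw (x : ι → ℝ) :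
    (klDiv (plantedLaw ep x) (couplings 0)).toReal =
      pressure ep x - (∑ b, x b ^ 2 / 2 + Real.log (Fintype.card (V → Bool))) := by
  rw [toReal_klDiv_of_measure_eq (plantedLaw_absolutelyContinuous ep x) (by simp),
    integral_congr_ae (llr_plantedLaw ep x),
    integral_sub (integrable_log_partitionFn_plantedLaw ep x) (integrable_const _),
    integral_log_partitionFn_plantedLaw]
  simp

theorem klDiv_plantedLaw_mul_le (y : ι → ℝ) {ρ : ι → ℝ} (hρ : ∀ b, |ρ b| ≤ 1) :
    klDiv (plantedLaw ep fun b => ρ b * y b) (couplings 0) ≤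
      klDiv (plantedLaw ep y) (couplings 0) := by
  have noise_preserved := measurePreserving_degrade_couplings (0 : ι → ℝ) hρ
  simp only [Pi.zero_apply, mul_zero] at noise_preserved
  calc klDiv (plantedLaw ep fun b => ρ b * y b) (couplings 0)
      = klDiv (((plantedLaw ep y).prod (couplings 0)).map (degrade ρ))
          (((couplings 0).prod (couplings 0)).map (degrade ρ)) := by
        rw [plantedLaw_map_degrade ep y hρ, noise_preserved.map_eq]
        rfl
    _ ≤ klDiv (plantedLaw ep y) (couplings 0) :=
        klDiv_map_prod_le _ _ _ (measurable_degrade ρ)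

end PlantedLaw

section Pressure

variable {V ι : Type*} [Fintype V] [DecidableEq V] [Fintype ι] (ep : ι → V × V)

theorem pressure_sub_half_sum_sq_mono {x y : ι → ℝ} (h : ∀ b, |x b| ≤ |y b|) :
    pressure ep x - ∑ b, x b ^ 2 / 2 ≤ pressure ep y - ∑ b, y b ^ 2 / 2 := by
  have abs_div_le_one (b : ι) : |x b / y b| ≤ 1 := by
    rw [abs_div]
    exact div_le_one_of_le₀ (h b) (abs_nonneg _)
  -- `y b = 0` forces `x b = 0`, so the junk value `x b / 0 = 0` does no harm.
  have div_mul_eq : (fun b => x b / y b * y b) = x := funext fun b =>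
    div_mul_cancel_of_imp fun hy => abs_nonpos_iff.1 (by simpa [hy] using h b)
  have klDiv_le := klDiv_plantedLaw_mul_le ep y abs_div_le_one
  rw [div_mul_eq] at klDiv_le
  have toReal_le := ENNReal.toReal_mono (klDiv_plantedLaw_ne_top ep y) klDiv_le
  rw [toReal_klDiv_plantedLaw, toReal_klDiv_plantedLaw] at toReal_le
  linarith

theorem pressure_monotone_in_bonds_general {x y : ι → ℝ} (h : ∀ b, |x b| ≤ |y b|) :
    pressure ep x ≤ pressure ep y := by
  have sum_sq_le : ∑ b, x b ^ 2 / 2 ≤ ∑ b, y b ^ 2 / 2 :=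
    Finset.sum_le_sum fun b _ => by gcongr ?_ / 2; exact sq_le_sq.2 (h b)
  linarith [pressure_sub_half_sum_sq_mono ep h]

end Pressure

/-- Monotonicity of the quenched pressure in the bond set: if `B' ⊆ B`
are two bond sets on the same finite site set and all parameters equal `x > 0`, then
`P_{B'} ≤ P_B` (the pressure with bond set `B''` being the one with `x_b = 0` off `B''`). -/
theorem pressure_monotone_in_bonds
    {V ι : Type*} [Fintype V] [DecidableEq V] [Fintype ι] [DecidableEq ι]
    (ep : ι → V × V) (hep : ∀ b, (ep b).1 ≠ (ep b).2)
    (B' B : Finset ι) (hBB : B' ⊆ B) (x : ℝ) (hx : 0 < x) :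
    pressure ep (fun b => if b ∈ B' then x else 0) ≤
      pressure ep (fun b => if b ∈ B then x else 0) := by
  refine pressure_monotone_in_bonds_general ep fun b => ?_
  by_cases hb : b ∈ B' <;> simp [hb, @hBB b]

end
end
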